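/- Fix real numbers λ₁,λ₂,λ₃,λ₄, pairwise distinct, with λᵢ+λⱼ > 0 for all i ≠ j, and let F : ℝ⁶ → ℝ⁶ be the SO(4) free rigid body vector field. Then each of the three functions C₁(x,y) = (1/2)(x₁²+x₂²+x₃²+y₁²+y₂²+y₃²), C₂(x,y) = x₁y₁+x₂y₂+x₃y₃, and I(x,y) = (λ₂²+λ₃²)x₁² + (λ₁²+λ₃²)x₂² + (λ₁²+λ₂²)x₃² + (λ₁²+λ₄²)y₁² + (λ₂²+λ₄²)y₂² + (λ₃²+λ₄²)y₃² is a first integral: at every point of ℝ⁶ the Euclidean gradient of the function is orthogonal to F, i.e. ∇C₁ · F = 0, ∇C₂ · F = 0, and ∇I · F = 0 identically. -/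

import Mathlib

/-!
Each function is a quadratic polynomial, so its derivative along `rbF` is a cubic form in the
coordinates, whose only monomials are `x₁x₂x₃`, `xᵢyⱼyₖ` (for `C₁`, `I`) or `y₁y₂y₃`, `yᵢxⱼxₖ`
(for `C₂`), with `i`, `j`, `k` distinct. For `C₁` and `C₂` each coefficient is a telescoping sum of
differences of the `1/(λᵢ+λⱼ)`. For `I`, the coefficient of the monomial belonging to a triple of
indices `a, b, c` is, after multiplication by `(λₐ+λ_b)(λ_b+λ_c)(λ_c+λₐ)`, a multiple of the
telescoping sum `(λₐ⁴-λ_b⁴) + (λ_b⁴-λ_c⁴) + (λ_c⁴-λₐ⁴) = 0`.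
-/

/-- The SO(4) free rigid body vector field on `ℝ⁶`, in coordinates
`(x₁,x₂,x₃,y₁,y₂,y₃) = (p 0, p 1, p 2, p 3, p 4, p 5)`. -/
noncomputable def rbF (l1 l2 l3 l4 : ℝ) (p : Fin 6 → ℝ) : Fin 6 → ℝ :=
  ![(1/(l1+l2) - 1/(l1+l3)) * (p 1 * p 2) + (1/(l3+l4) - 1/(l2+l4)) * (p 4 * p 5),
    (1/(l2+l3) - 1/(l1+l2)) * (p 0 * p 2) + (1/(l1+l4) - 1/(l3+l4)) * (p 3 * p 5),
    (1/(l1+l3) - 1/(l2+l3)) * (p 0 * p 1) + (1/(l2+l4) - 1/(l1+l4)) * (p 3 * p 4),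
    (1/(l3+l4) - 1/(l1+l3)) * (p 1 * p 5) + (1/(l1+l2) - 1/(l2+l4)) * (p 2 * p 4),
    (1/(l2+l3) - 1/(l3+l4)) * (p 0 * p 5) + (1/(l1+l4) - 1/(l1+l2)) * (p 2 * p 3),
    (1/(l2+l4) - 1/(l2+l3)) * (p 0 * p 4) + (1/(l1+l3) - 1/(l1+l4)) * (p 1 * p 3)]

/-- The point of `s₊` (`ε = 1`) or `s₋` (`ε = -1`) with parameters `(a₁,a₂,a₃)`. -/
noncomputable def sPoint (l1 l2 l3 l4 ε a₁ a₂ a₃ : ℝ) : Fin 6 → ℝ :=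
  ![a₁/(l1+l4), a₂/(l2+l4), a₃/(l3+l4),
    ε * a₁/(l2+l3), ε * a₂/(l1+l3), ε * a₃/(l1+l2)]

/-- The Casimir function `C₁` on `so(4) ≅ ℝ⁶`. -/
noncomputable def C1fn (p : Fin 6 → ℝ) : ℝ :=
  (1/2) * (p 0^2 + p 1^2 + p 2^2 + p 3^2 + p 4^2 + p 5^2)

/-- The Casimir function `C₂` on `so(4) ≅ ℝ⁶`. -/
noncomputable def C2fn (p : Fin 6 → ℝ) : ℝ :=
  p 0 * p 3 + p 1 * p 4 + p 2 * p 5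

/-- Mishchenko's additional first integral `I` of the SO(4) free rigid body. -/
noncomputable def Ifn (l1 l2 l3 l4 : ℝ) (p : Fin 6 → ℝ) : ℝ :=
  (l2^2+l3^2) * p 0^2 + (l1^2+l3^2) * p 1^2 + (l1^2+l2^2) * p 2^2 +
    (l1^2+l4^2) * p 3^2 + (l2^2+l4^2) * p 4^2 + (l3^2+l4^2) * p 5^2

/-- `C₁`, `C₂` and `I` are first integrals of the SO(4) free
rigid body: at every point the (directional derivative along `F` of each
function, i.e. the Euclidean gradient dotted with `F`) vanishes. -/
theorem stmt6 (l1 l2 l3 l4 : ℝ)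
    (hd12 : l1 ≠ l2) (hd13 : l1 ≠ l3) (hd14 : l1 ≠ l4)
    (hd23 : l2 ≠ l3) (hd24 : l2 ≠ l4) (hd34 : l3 ≠ l4)
    (hp12 : 0 < l1 + l2) (hp13 : 0 < l1 + l3) (hp14 : 0 < l1 + l4)
    (hp23 : 0 < l2 + l3) (hp24 : 0 < l2 + l4) (hp34 : 0 < l3 + l4)
    (p : Fin 6 → ℝ) :
    fderiv ℝ C1fn p (rbF l1 l2 l3 l4 p) = 0 ∧
    fderiv ℝ C2fn p (rbF l1 l2 l3 l4 p) = 0 ∧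
    fderiv ℝ (Ifn l1 l2 l3 l4) p (rbF l1 l2 l3 l4 p) = 0 := by
  have hc (i : Fin 6) : HasFDerivAt (fun q : Fin 6 → ℝ => q i)
      (ContinuousLinearMap.proj (R := ℝ) (φ := fun _ : Fin 6 => ℝ) i) p :=
    hasFDerivAt_apply i p
  have hs (i : Fin 6) := (hc i).pow 2
  refine ⟨?_, ?_, ?_⟩
  · have h : HasFDerivAt C1fn _ p :=
      ((((((hs 0).add (hs 1)).add (hs 2)).add (hs 3)).add (hs 4)).add (hs 5)).const_mul (1 / 2)
    rw [h.fderiv]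
    simp [rbF]
    ring
  · have h : HasFDerivAt C2fn _ p :=
      (((hc 0).mul (hc 3)).add ((hc 1).mul (hc 4))).add ((hc 2).mul (hc 5))
    rw [h.fderiv]
    simp [rbF]
    ring
  · have h : HasFDerivAt (Ifn l1 l2 l3 l4) _ p :=
      ((((((hs 0).const_mul (l2^2+l3^2)).add ((hs 1).const_mul (l1^2+l3^2))).add
        ((hs 2).const_mul (l1^2+l2^2))).add ((hs 3).const_mul (l1^2+l4^2))).add
        ((hs 4).const_mul (l2^2+l4^2))).add ((hs 5).const_mul (l3^2+l4^2))
    rw [h.fderiv]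
    simp [rbF]
    -- Here the denominators no longer cancel formally: they must be cleared, using `λᵢ + λⱼ ≠ 0`.
    field_simp
    ring
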